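/- Let τ be a decorated permutation of {1,…,n} all of whose schedule numbers equal 1 (such τ has at least one undecorated letter, so δ_k(τ) is defined). Then for every k with 1 ≤ k ≤ n+1, the decorated permutation δ_k(τ) of {1,…,n+1} has all of its n+1 schedule numbers equal to 1. -/

import Mathlib

/-!
The cyclic order on the values is the key: the schedule number of position `i` counts undecorated
positions `t` such that the factor between `t` and `i` is cyclically decreasing, with `t < i` if
`i` is undecorated and `t > i` if `i` is decorated (`schedNum_undec`, `schedNum_dec`). Indeed,
walking left from `i`, a cyclically decreasing factor first uses up the part of `r_j` above `σ_i`
and then wraps around once, through the tail of `r_{j-1}` that lies below `σ_i`; the decorated case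
is the mirror image.

This description is invariant under `τ ↦ k + τ`, because adding `k` modulo `n + 1` preserves
the cyclic order of the values (`cycDec_shift`). So `δ_k(τ)` differs from `τ` only through the new
letter `0` in front and the decoration of position `1`. A factor of `τ` starting at position `0` and
ending at an undecorated position can be cyclically decreasing only if it ends at the first
undecorated position `p`, and for `p` it is (`eq_first_of_cycDec`, `cycDec_first`). Hence only the
schedule numbers at positions `1` and `p + 1` of `δ_k(τ)` need attention. If `k + τ_p ≤ n + 1`,
position `1` is undecorated and the new `0` does not extend the factor ending at `p + 1`; otherwise
`k + τ_1, …, k + τ_p` all wrap around, the new `0` does extend the factor, and it takes the place of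
the now decorated position `1`.
-/

open Finset

namespace QEuler

/-! ### Entries of a permutation of `{1,…,n}`, with the convention `σ₀ = 0`.
A permutation `σ ∈ S_n` is represented by `Equiv.Perm (Fin n)`; its entry at
position `i ∈ {1,…,n}` is `(σ (i-1)).val + 1 ∈ {1,…,n}`, and all other
positions (in particular position `0`) carry the value `0`. -/

def ent {n : ℕ} (σ : Equiv.Perm (Fin n)) (i : ℕ) : ℕ :=
  if h : 1 ≤ i ∧ i ≤ n then ((σ ⟨i - 1, by omega⟩ : Fin n) : ℕ) + 1 else 0

/-- Decorations: a set `D : Finset (Fin n)` records the decorated positions,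
`j : Fin n` encoding position `j+1 ∈ {1,…,n}`.  `isDec D i` tells whether
position `i` is decorated (position `0` never is). -/
def isDec {n : ℕ} (D : Finset (Fin n)) (i : ℕ) : Bool :=
  if h : 1 ≤ i ∧ i ≤ n then decide ((⟨i - 1, by omega⟩ : Fin n) ∈ D) else false

/-- Number of decorated positions among `{1,…,n}` for a decoration predicate. -/
def decCount (n : ℕ) (D : ℕ → Bool) : ℕ :=
  ((Finset.Icc 1 n).filter fun i => D i = true).card

/-! ### Major index and reverse major index -/

/-- Major index of the word `E 1, E 2, …, E n`. -/
def maj (n : ℕ) (E : ℕ → ℕ) : ℕ :=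
  ∑ i ∈ Finset.Icc 1 (n - 1), if E (i + 1) < E i then i else 0

/-- Reverse major index: the major index of the reversed word `E n, …, E 1`. -/
def revmaj (n : ℕ) (E : ℕ → ℕ) : ℕ := maj n fun i => E (n + 1 - i)

/-! ### Decreasing runs and schedule numbers -/

/-- The word is strictly decreasing along consecutive positions `p,…,q`. -/
def decOn (E : ℕ → ℕ) (p q : ℕ) : Prop := ∀ t ∈ Finset.Ico p q, E (t + 1) < E t

instance (E : ℕ → ℕ) (p q : ℕ) : Decidable (decOn E p q) := by
  unfold decOn; infer_instance

/-- Start of the maximal strictly decreasing consecutive run containing position `i`. -/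
def runStart (E : ℕ → ℕ) (i : ℕ) : ℕ :=
  Nat.find (show ∃ p, decOn E p i from ⟨i, fun t ht => absurd ht (by simp)⟩)

/-- End of the maximal strictly decreasing consecutive run containing position `i`
(positions are `0,…,n`). -/
def runEnd (n : ℕ) (E : ℕ → ℕ) (i : ℕ) : ℕ :=
  Nat.findGreatest (fun q => decOn E i q) n

/-- The schedule number of a decorated permutation (given by its entry word `E` on
positions `0,…,n`, with `E 0 = 0`, and decoration predicate `D`) at position `i`.
If `σ_i` is undecorated and lies in run `r_j` it counts the undecorated entries of `r_j`
larger than `σ_i` plus the undecorated entries of `r_{j-1}` smaller than `σ_i`;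
if `σ_i` is decorated it counts the undecorated entries of `r_j` smaller than `σ_i`
plus the undecorated entries of `r_{j+1}` larger than `σ_i`. -/
def schedNum (n : ℕ) (E : ℕ → ℕ) (D : ℕ → Bool) (i : ℕ) : ℕ :=
  if D i = true then
    ((Finset.Icc (runStart E i) (runEnd n E i)).filter fun t => D t = false ∧ E t < E i).card
      + (if runEnd n E i < n then
          ((Finset.Icc (runEnd n E i + 1) (runEnd n E (runEnd n E i + 1))).filter
            fun t => D t = false ∧ E i < E t).card
        else 0)
  else
    ((Finset.Icc (runStart E i) (runEnd n E i)).filter fun t => D t = false ∧ E i < E t).card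
      + (if runStart E i = 0 then 0 else
          ((Finset.Icc (runStart E (runStart E i - 1)) (runStart E i - 1)).filter
            fun t => D t = false ∧ E t < E i).card)

/-! ### Cyclic runs -/

/-- `σ_i,…,σ_j` is a cyclic (decreasing) run: for some shift `k`, the residues
`σ_t + k (mod n+1)` are strictly decreasing for `t = i,…,j`. -/
def IsCyclicRun (n : ℕ) (E : ℕ → ℕ) (i j : ℕ) : Prop :=
  i ≤ j ∧ j ≤ n ∧ ∃ k : ℕ, ∀ t ∈ Finset.Ico i j, (E (t + 1) + k) % (n + 1) < (E t + k) % (n + 1)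

/-- A cyclic run which cannot be extended to the left. -/
def LeftMaximalRun (n : ℕ) (E : ℕ → ℕ) (i j : ℕ) : Prop :=
  IsCyclicRun n E i j ∧ (i = 0 ∨ ¬ IsCyclicRun n E (i - 1) j)

/-- A cyclic run which cannot be extended to the right. -/
def RightMaximalRun (n : ℕ) (E : ℕ → ℕ) (i j : ℕ) : Prop :=
  IsCyclicRun n E i j ∧ (j = n ∨ ¬ IsCyclicRun n E i (j + 1))

/-! ### Double ascents, descents, peaks, valleys; `inv3` and `monot` -/

def DblAsc (E : ℕ → ℕ) (j : ℕ) : Prop := E (j - 2) < E (j - 1) ∧ E (j - 1) < E j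
def DblDesc (E : ℕ → ℕ) (j : ℕ) : Prop := E (j - 1) < E (j - 2) ∧ E j < E (j - 1)
def IsPeak (E : ℕ → ℕ) (j : ℕ) : Prop := E (j - 2) < E (j - 1) ∧ E j < E (j - 1)
def IsValley (E : ℕ → ℕ) (j : ℕ) : Prop := E (j - 1) < E (j - 2) ∧ E (j - 1) < E j

instance (E : ℕ → ℕ) (j : ℕ) : Decidable (DblAsc E j) := by unfold DblAsc; infer_instance
instance (E : ℕ → ℕ) (j : ℕ) : Decidable (DblDesc E j) := by unfold DblDesc; infer_instance
instance (E : ℕ → ℕ) (j : ℕ) : Decidable (IsPeak E j) := by unfold IsPeak; infer_instance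
instance (E : ℕ → ℕ) (j : ℕ) : Decidable (IsValley E j) := by unfold IsValley; infer_instance

/-- `(i,j)` is a 3-inversion. -/
def Inv3Pair (E : ℕ → ℕ) (i j : ℕ) : Prop :=
  (DblAsc E j ∧ E (j - 1) < E i ∧ E i < E j) ∨
  (DblDesc E j ∧ E j < E i ∧ E i < E (j - 1)) ∨
  (IsPeak E j ∧ E j < E i) ∨
  (IsValley E j ∧ E i < E j)

instance (E : ℕ → ℕ) (i j : ℕ) : Decidable (Inv3Pair E i j) := by
  unfold Inv3Pair; infer_instance

/-- Number of 3-inversions of the word `E 1, …, E n` (with the convention `E 0 = 0`). -/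
def inv3 (n : ℕ) (E : ℕ → ℕ) : ℕ :=
  ((Finset.Icc 1 n ×ˢ Finset.Icc 1 n).filter fun p => p.1 < p.2 ∧ Inv3Pair E p.1 p.2).card

/-- Number of double ascents and double descents. -/
def monot (n : ℕ) (E : ℕ → ℕ) : ℕ :=
  ((Finset.Icc 2 n).filter fun j => DblAsc E j ∨ DblDesc E j).card

/-! ### Alternating permutations, `31-2` patterns and Chebikin's statistic -/

/-- `σ₁ > σ₂ < σ₃ > ⋯`. -/
def IsAlternating (n : ℕ) (E : ℕ → ℕ) : Prop :=
  ∀ i ∈ Finset.Icc 1 (n - 1), if Odd i then E (i + 1) < E i else E i < E (i + 1)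

instance (n : ℕ) (E : ℕ → ℕ) : Decidable (IsAlternating n E) := by
  unfold IsAlternating; infer_instance

/-- The finset of alternating permutations of `{1,…,n}`. -/
def altPerms (n : ℕ) : Finset (Equiv.Perm (Fin n)) :=
  Finset.univ.filter fun σ => IsAlternating n (ent σ)

/-- Number of `31-2` patterns: pairs `(i,j)` with `i+1 < j ≤ n` and `σ_j > σ_i > σ_{i+1}`. -/
def pat312 (n : ℕ) (E : ℕ → ℕ) : ℕ :=
  ((Finset.Icc 1 n ×ˢ Finset.Icc 1 n).filter fun p =>
    p.1 + 1 < p.2 ∧ E (p.1 + 1) < E p.1 ∧ E p.1 < E p.2).card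

/-- Chebikin's alternating inversion statistic `î`. -/
def chebi (n : ℕ) (E : ℕ → ℕ) : ℕ :=
  ∑ i ∈ Finset.Icc 1 (n - 1),
    ((Finset.Icc (i + 1) n).filter fun j => if Odd i then E j < E i else E i < E j).card

/-! ### Insertion `η_l`, structural attribute `ã`, the shift `k + τ` and `δ_k` -/

/-- The entry word of the insertion `η_l(σ) ∈ S_{n+1}` of the value `l` at the end of `σ ∈ S_n`. -/
def etaEnt (n l : ℕ) (E : ℕ → ℕ) (i : ℕ) : ℕ :=
  if i = n + 1 then l
  else if 1 ≤ i ∧ i ≤ n then (if l ≤ E i then E i + 1 else E i) else 0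

/-- Structural attribute `ã(σ)` of `σ ∈ S_n`. -/
def atil (n : ℕ) (E : ℕ → ℕ) : ℕ :=
  if E (n - 1) < E n then n + 1 - E n else E n

/-- The entry word of `k + τ ∈ S_{n+1}` for `τ ∈ S_n`:
`σ₀ = 0` and `σ_{i+1}` is the representative of `k + τ_i (mod n+1)` in `{1,…,n+1}`. -/
def shiftEnt (n k : ℕ) (E : ℕ → ℕ) (i : ℕ) : ℕ :=
  if i = 0 then 0
  else if (k + E (i - 1)) % (n + 1) = 0 then n + 1 else (k + E (i - 1)) % (n + 1)

/-- Position of the first (leftmost, among `1,…,n`) undecorated letter;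
equals `n+1` if every position is decorated. -/
def firstUndecPos (n : ℕ) (D : ℕ → Bool) : ℕ :=
  Nat.find (show ∃ i, n < i ∨ (1 ≤ i ∧ D i = false) from ⟨n + 1, Or.inl (by omega)⟩)

/-- `a(τ)`: the value of the first undecorated letter of `τ`. -/
def aVal (n : ℕ) (E : ℕ → ℕ) (D : ℕ → Bool) : ℕ := E (firstUndecPos n D)

/-- Decorations of the `k`-th descendant `δ_k(τ)`: position `1` is decorated iff
`k > n+1-a(τ)`, and for `i ≥ 2` position `i` is decorated iff position `i-1` of `τ` is. -/
def deltaDec (n k : ℕ) (D : ℕ → Bool) (aval : ℕ) (i : ℕ) : Bool :=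
  if i = 0 then false
  else if i = 1 then decide (n + 1 - aval < k)
  else D (i - 1)

/-! ### Valley-decorated standardly labelled Dyck paths

A path of size `n` is encoded by its area word `a : Fin n → Fin n`
(`a i` = number of whole squares between the `(i+1)`-st north step and the diagonal;
a word `a₁ ⋯ a_n` is the area word of a Dyck path iff `a₁ = 0` and `a_i ≤ a_{i-1} + 1`),
its labelling `w : Equiv.Perm (Fin n)`, and its decoration set `dv : Finset (Fin n)`
(`j` encoding the position `j+1`). -/

abbrev PathData (n : ℕ) := (Fin n → Fin n) × Equiv.Perm (Fin n) × Finset (Fin n)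

/-- The area word, on positions `1,…,n`. -/
def aw {n : ℕ} (P : PathData n) (i : ℕ) : ℕ :=
  if h : 1 ≤ i ∧ i ≤ n then ((P.1 ⟨i - 1, by omega⟩ : Fin n) : ℕ) else 0

/-- The labels, on positions `1,…,n`. -/
def lbl {n : ℕ} (P : PathData n) (i : ℕ) : ℕ := ent P.2.1 i

/-- Whether the `i`-th north step is decorated. -/
def pdec {n : ℕ} (P : PathData n) (i : ℕ) : Bool := isDec P.2.2 i

/-- The `i`-th north step is a contractible valley: `a_{i-1} > a_i`, or
`a_{i-1} = a_i` and `w_{i-1} < w_i`. -/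
def ContractibleValley {n : ℕ} (P : PathData n) (i : ℕ) : Prop :=
  2 ≤ i ∧ i ≤ n ∧ (aw P i < aw P (i - 1) ∨ (aw P (i - 1) = aw P i ∧ lbl P (i - 1) < lbl P i))

instance {n : ℕ} (P : PathData n) (i : ℕ) : Decidable (ContractibleValley P i) := by
  unfold ContractibleValley; infer_instance

/-- `P` encodes a genuine valley-decorated standardly labelled Dyck path:
the area word is valid, labels in a common column increase from bottom to top
(equivalently, consecutive north steps carry increasing labels), and every
decoration sits on a contractible valley. -/
def IsValidPath {n : ℕ} (P : PathData n) : Prop :=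
  (1 ≤ n → aw P 1 = 0) ∧
  (∀ i ∈ Finset.Icc 2 n, aw P i ≤ aw P (i - 1) + 1) ∧
  (∀ i ∈ Finset.Icc 2 n, aw P i = aw P (i - 1) + 1 → lbl P (i - 1) < lbl P i) ∧
  (∀ i ∈ Finset.Icc 1 n, pdec P i = true → ContractibleValley P i)

instance {n : ℕ} (P : PathData n) : Decidable (IsValidPath P) := by
  unfold IsValidPath; infer_instance

/-- The finset `stLD(n)^{•k}` of valley-decorated standardly labelled Dyck paths
of size `n` with exactly `k` decorated (contractible) valleys. -/
def stLD (n k : ℕ) : Finset (PathData n) :=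
  Finset.univ.filter fun P => IsValidPath P ∧ P.2.2.card = k

/-- The area statistic. -/
def area {n : ℕ} (P : PathData n) : ℕ := ∑ i ∈ Finset.Icc 1 n, aw P i

/-- `(i,j)` is a primary diagonal inversion. -/
def PrimaryDinv {n : ℕ} (P : PathData n) (i j : ℕ) : Prop :=
  aw P i = aw P j ∧ lbl P i < lbl P j ∧ pdec P i = false

/-- `(i,j)` is a secondary diagonal inversion. -/
def SecondaryDinv {n : ℕ} (P : PathData n) (i j : ℕ) : Prop :=
  aw P i = aw P j + 1 ∧ lbl P j < lbl P i ∧ pdec P i = false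

instance {n : ℕ} (P : PathData n) (i j : ℕ) : Decidable (PrimaryDinv P i j) := by
  unfold PrimaryDinv; infer_instance
instance {n : ℕ} (P : PathData n) (i j : ℕ) : Decidable (SecondaryDinv P i j) := by
  unfold SecondaryDinv; infer_instance

/-- The set of diagonal-inversion pairs `(i,j)`, `1 ≤ i < j ≤ n`. -/
def dinvPairs {n : ℕ} (P : PathData n) : Finset (ℕ × ℕ) :=
  (Finset.Icc 1 n ×ˢ Finset.Icc 1 n).filter fun p =>
    p.1 < p.2 ∧ (PrimaryDinv P p.1 p.2 ∨ SecondaryDinv P p.1 p.2)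

/-- `dinv(P)`: number of primary and secondary diagonal inversions minus the
number of decorated valleys (a nonnegative quantity). -/
def dinv {n : ℕ} (P : PathData n) : ℕ := (dinvPairs P).card - P.2.2.card

/-! ### The diagonal word of a path -/

/-- Position in the diagonal word of the label of the `i`-th north step:
labels are listed diagonal by diagonal, and within a diagonal in decreasing order. -/
def dwPos {n : ℕ} (P : PathData n) (i : ℕ) : ℕ :=
  ((Finset.Icc 1 n).filter fun i' =>
    aw P i' < aw P i ∨ (aw P i' = aw P i ∧ lbl P i ≤ lbl P i')).card

/-- The `j`-th letter of the diagonal word `dw(P)`. -/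
def dwEnt {n : ℕ} (P : PathData n) (j : ℕ) : ℕ :=
  ∑ i ∈ (Finset.Icc 1 n).filter (fun i => dwPos P i = j), lbl P i

/-- Whether the `j`-th letter of the diagonal word is decorated. -/
def dwDec {n : ℕ} (P : PathData n) (j : ℕ) : Bool :=
  decide (((Finset.Icc 1 n).filter fun i => dwPos P i = j ∧ pdec P i = true).Nonempty)

end QEuler

namespace QEuler

/-- All schedule numbers of the decorated permutation equal `1`. -/
def HasSchedOne (n : ℕ) (E : ℕ → ℕ) (D : ℕ → Bool) : Prop :=
  ∀ i ∈ Finset.Icc 1 n, schedNum n E D i = 1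

instance (n : ℕ) (E : ℕ → ℕ) (D : ℕ → Bool) : Decidable (HasSchedOne n E D) := by
  unfold HasSchedOne; infer_instance

/-- The diagonal word of `P` is the decorated permutation `(σ, D)`. -/
def DwEq {n : ℕ} (P : PathData n) (σ : Equiv.Perm (Fin n)) (D : Finset (Fin n)) : Prop :=
  (∀ j ∈ Finset.Icc 1 n, dwEnt P j = ent σ j) ∧ ∀ j ∈ Finset.Icc 1 n, dwDec P j = isDec D j

instance {n : ℕ} (P : PathData n) (σ : Equiv.Perm (Fin n)) (D : Finset (Fin n)) :
    Decidable (DwEq P σ D) := by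
  unfold DwEq; infer_instance

end QEuler

namespace QEuler

/-- The values `x, y, z` are in strictly decreasing cyclic order. -/
def Cyc (x y z : ℕ) : Prop := (z < y ∧ y < x) ∨ (x < z ∧ z < y) ∨ (y < x ∧ x < z)

/-- The word `E` is cyclically decreasing along positions `p,…,q`, expressed through triples so
that no shift of the values has to be chosen. -/
def CycDec (E : ℕ → ℕ) (p q : ℕ) : Prop :=
  ∀ a b c, p ≤ a → a < b → b < c → c ≤ q → Cyc (E a) (E b) (E c)

lemma CycDec.mono {E : ℕ → ℕ} {p q p' q' : ℕ} (h : CycDec E p q) (hp : p ≤ p') (hq : q' ≤ q) :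
    CycDec E p' q' :=
  fun a b c h1 h2 h3 h4 => h a b c (by omega) h2 h3 (by omega)

/-! ### Runs -/

lemma decOn_iff (E : ℕ → ℕ) (p q : ℕ) :
    decOn E p q ↔ ∀ a b, p ≤ a → a < b → b ≤ q → E b < E a := by
  constructor
  · intro h a b ha hab hb
    induction b, hab using Nat.le_induction with
    | base => exact h a (by simp; omega)
    | succ m hm ih =>
      have := h m (by simp only [Finset.mem_Ico]; omega)
      have := ih (by omega)
      omega
  · intro h t ht
    simp only [Finset.mem_Ico] at ht
    exact h t (t + 1) ht.1 (by omega) (by omega)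

lemma runStart_le (E : ℕ → ℕ) (i : ℕ) : runStart E i ≤ i :=
  Nat.find_min' _ (fun t ht => absurd ht (by simp))

lemma runStart_le_iff (E : ℕ → ℕ) (i p : ℕ) : runStart E i ≤ p ↔ decOn E p i := by
  constructor
  · intro h t ht
    have hs : decOn E (runStart E i) i := by
      unfold runStart
      exact Nat.find_spec (p := fun p => decOn E p i) _
    simp only [Finset.mem_Ico] at ht
    exact hs t (by simp only [Finset.mem_Ico]; omega)
  · exact fun h => Nat.find_min' _ h

lemma runEnd_le (n : ℕ) (E : ℕ → ℕ) (i : ℕ) : runEnd n E i ≤ n := Nat.findGreatest_le _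

lemma le_runEnd {n : ℕ} (E : ℕ → ℕ) {i : ℕ} (hi : i ≤ n) : i ≤ runEnd n E i :=
  Nat.le_findGreatest hi (fun t ht => absurd ht (by simp))

lemma le_runEnd_iff {n : ℕ} (E : ℕ → ℕ) {i q : ℕ} (hi : i ≤ n) (hq : q ≤ n) :
    q ≤ runEnd n E i ↔ decOn E i q := by
  constructor
  · intro h t ht
    have hs : decOn E i (runEnd n E i) :=
      Nat.findGreatest_spec (P := fun q => decOn E i q) hi (fun t ht => absurd ht (by simp))
    simp only [Finset.mem_Ico] at ht
    exact hs t (by simp only [Finset.mem_Ico]; omega)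
  · exact fun h => Nat.le_findGreatest hq h

/-- A cyclically decreasing factor is decreasing, up to a single wrap-around `m → m + 1`. -/
lemma cycDec_of_ascent {E : ℕ → ℕ} {t m i : ℕ} (htm : t ≤ m) (hmi : m < i)
    (hasc : E m < E (m + 1)) :
    CycDec E t i ↔ decOn E t m ∧ decOn E (m + 1) i ∧ E t < E i := by
  rw [decOn_iff, decOn_iff]
  constructor
  · intro h
    refine ⟨?_, ?_, ?_⟩
    · intro a b h1 h2 h3
      have e1 := h a b (m + 1) h1 h2 (by omega) (by omega)
      rcases Nat.lt_or_ge b m with hb | hb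
      · have e2 := h a b m h1 h2 hb (by omega)
        have e3 := h a m (m + 1) h1 (by omega) (by omega) (by omega)
        unfold Cyc at e1 e2 e3; omega
      · obtain rfl : b = m := by omega
        unfold Cyc at e1; omega
    · intro a b h1 h2 h3
      have e1 := h m a b (by omega) (by omega) h2 (by omega)
      rcases Nat.lt_or_ge (m + 1) a with hb | hb
      · have e2 := h m (m + 1) a (by omega) (by omega) hb (by omega)
        unfold Cyc at e1 e2; omega
      · obtain rfl : a = m + 1 := by omega
        unfold Cyc at e1; omega
    · have e1 : t < m → Cyc (E t) (E m) (E (m + 1)) :=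
        fun hh => h t m (m + 1) le_rfl hh (by omega) (by omega)
      have e2 : m + 1 < i → Cyc (E m) (E (m + 1)) (E i) :=
        fun hh => h m (m + 1) i (by omega) (by omega) hh (by omega)
      have e3 : t < m → Cyc (E t) (E m) (E i) :=
        fun hh => h t m i le_rfl hh (by omega) (by omega)
      unfold Cyc at e1 e2 e3
      rcases Nat.lt_or_ge t m with h1 | h1 <;> rcases Nat.lt_or_ge (m + 1) i with h2 | h2
      · have := e1 h1; have := e2 h2; have := e3 h1; omega
      · obtain rfl : i = m + 1 := by omega
        have := e1 h1; omega
      · obtain rfl : t = m := by omega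
        have := e2 h2; omega
      · obtain rfl : t = m := by omega
        obtain rfl : i = t + 1 := by omega
        exact hasc
  · rintro ⟨h1, h2, h3⟩ a b c ha hab hbc hc
    have l1 : ∀ x, t ≤ x → x ≤ m → E x ≤ E t := by
      intro x hx hx'
      rcases Nat.eq_or_lt_of_le hx with rfl | hx
      · exact le_rfl
      · exact (h1 t x le_rfl hx hx').le
    have l2 : ∀ x, m < x → x ≤ i → E i ≤ E x := by
      intro x hx hx'
      rcases Nat.eq_or_lt_of_le hx' with rfl | hx'
      · exact le_rfl
      · exact (h2 x i hx hx' le_rfl).le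
    unfold Cyc
    rcases Nat.lt_or_ge m a with ham | ham
    · have := h2 a b ham hab (by omega)
      have := h2 b c (by omega) hbc (by omega)
      omega
    · have a1 := l1 a ha ham
      rcases Nat.lt_or_ge m b with hbm | hbm
      · have := h2 b c hbm hbc hc
        have := l2 c (by omega) hc
        omega
      · have := h1 a b ha hab hbm
        rcases Nat.lt_or_ge m c with hcm | hcm
        · have := l2 c hcm hc
          omega
        · have := h1 b c (by omega) hbc hcm
          omega

lemma cycDec_of_decOn {E : ℕ → ℕ} {p q : ℕ} (h : decOn E p q) : CycDec E p q := by
  rw [decOn_iff] at h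
  intro a b c ha hab hbc hc
  exact Or.inl ⟨h b c (by omega) hbc hc, h a b ha hab (by omega)⟩

/-! ### Schedule numbers through the cyclic order -/

open Classical in
lemma schedNum_undec {n : ℕ} {E : ℕ → ℕ} {D : ℕ → Bool}
    (hE : ∀ a b, a < b → b ≤ n → E a ≠ E b) {i : ℕ} (hi : i ≤ n) (hD : D i = false) :
    schedNum n E D i = ((range i).filter fun t => D t = false ∧ CycDec E t i).card := by
  have hrs := runStart_le E i
  have hdec : decOn E (runStart E i) i := (runStart_le_iff E i _).1 le_rfl
  have hre := le_runEnd E hi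
  have hen := runEnd_le n E i
  have hdec' : decOn E i (runEnd n E i) := (le_runEnd_iff E hi hen).1 le_rfl
  rw [decOn_iff] at hdec'
  have hd := (decOn_iff _ _ _).1 hdec
  have hA : (Icc (runStart E i) (runEnd n E i)).filter (fun t => D t = false ∧ E i < E t)
      = (Ico (runStart E i) i).filter (fun t => D t = false ∧ CycDec E t i) := by
    ext t
    simp only [mem_filter, mem_Icc, mem_Ico]
    constructor
    · rintro ⟨⟨h1, h2⟩, h3, h4⟩
      have hti : t < i := by
        by_contra hc
        rcases Nat.eq_or_lt_of_le (not_lt.1 hc) with h | h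
        · subst h; omega
        · have := hdec' i t le_rfl h h2; omega
      exact ⟨⟨h1, hti⟩, h3, cycDec_of_decOn ((runStart_le_iff E i t).1 h1)⟩
    · rintro ⟨⟨h1, h2⟩, h3, -⟩
      exact ⟨⟨h1, by omega⟩, h3, hd t i h1 h2 le_rfl⟩
  unfold schedNum
  rw [if_neg (by simp [hD]), hA]
  rcases Nat.eq_zero_or_pos (runStart E i) with h0 | h0
  · rw [if_pos h0, h0, ← range_eq_Ico, add_zero]
  · rw [if_neg (by omega)]
    obtain ⟨m, hm⟩ : ∃ m, runStart E i = m + 1 := ⟨runStart E i - 1, by omega⟩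
    rw [hm, Nat.add_sub_cancel]
    rw [hm] at hdec hrs
    have hasc : E m < E (m + 1) := by
      by_contra hc
      have hlt : E (m + 1) < E m := by
        have := hE m (m + 1) (by omega) (by omega); omega
      have : runStart E i ≤ m := by
        rw [runStart_le_iff]
        intro s hs
        simp only [mem_Ico] at hs
        rcases Nat.eq_or_lt_of_le hs.1 with rfl | h
        · exact hlt
        · exact hdec s (by simp only [mem_Ico]; omega)
      omega
    have hB : (Icc (runStart E m) m).filter (fun t => D t = false ∧ E t < E i)
        = (range (m + 1)).filter (fun t => D t = false ∧ CycDec E t i) := by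
      ext t
      simp only [mem_filter, mem_Icc, mem_range]
      constructor
      · rintro ⟨⟨h1, h2⟩, h3, h4⟩
        exact ⟨by omega, h3, (cycDec_of_ascent h2 (by omega) hasc).2
          ⟨(runStart_le_iff _ _ _).1 h1, hdec, h4⟩⟩
      · rintro ⟨h1, h3, h4⟩
        have := (cycDec_of_ascent (by omega) (by omega) hasc).1 h4
        exact ⟨⟨(runStart_le_iff _ _ _).2 this.1, by omega⟩, h3, this.2.2⟩
    rw [hB, ← card_union_of_disjoint, ← filter_union]
    · congr 2
      ext t
      simp only [mem_union, mem_Ico, mem_range]; omega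
    · apply disjoint_filter_filter
      rw [disjoint_left]
      intro t
      simp only [mem_Ico, mem_range]; omega

open Classical in
lemma schedNum_dec {n : ℕ} {E : ℕ → ℕ} {D : ℕ → Bool}
    (hE : ∀ a b, a < b → b ≤ n → E a ≠ E b) {i : ℕ} (hi : i ≤ n) (hD : D i = true) :
    schedNum n E D i = ((Ioc i n).filter fun t => D t = false ∧ CycDec E i t).card := by
  have hrs := runStart_le E i
  have hre := le_runEnd E hi
  have hen := runEnd_le n E i
  have hd := (decOn_iff _ _ _).1 ((runStart_le_iff E i _).1 le_rfl)
  have hdec : decOn E i (runEnd n E i) := (le_runEnd_iff E hi hen).1 le_rfl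
  have hd' := (decOn_iff _ _ _).1 hdec
  have hA : (Icc (runStart E i) (runEnd n E i)).filter (fun t => D t = false ∧ E t < E i)
      = (Ioc i (runEnd n E i)).filter (fun t => D t = false ∧ CycDec E i t) := by
    ext t
    simp only [mem_filter, mem_Icc, mem_Ioc]
    constructor
    · rintro ⟨⟨h1, h2⟩, h3, h4⟩
      have hti : i < t := by
        by_contra hc
        rcases Nat.eq_or_lt_of_le (not_lt.1 hc) with h | h
        · subst h; omega
        · have := hd t i h1 h le_rfl; omega
      exact ⟨⟨hti, h2⟩, h3, cycDec_of_decOn ((le_runEnd_iff E hi (by omega)).1 h2)⟩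
    · rintro ⟨⟨h1, h2⟩, h3, -⟩
      exact ⟨⟨by omega, h2⟩, h3, hd' i t le_rfl h1 h2⟩
  unfold schedNum
  rw [if_pos hD, hA]
  rcases Nat.eq_or_lt_of_le hen with h0 | h0
  · rw [if_neg (by omega), h0, add_zero]
  · rw [if_pos h0]
    set m := runEnd n E i with hm
    have hasc : E m < E (m + 1) := by
      by_contra hc
      have hlt : E (m + 1) < E m := by
        have := hE m (m + 1) (by omega) (by omega); omega
      have : m + 1 ≤ runEnd n E i := by
        rw [le_runEnd_iff E hi (by omega)]
        intro s hs
        simp only [mem_Ico] at hs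
        rcases Nat.eq_or_lt_of_le (Nat.le_of_lt_succ hs.2) with rfl | h
        · exact hlt
        · exact hdec s (by simp only [mem_Ico]; omega)
      omega
    have hB : (Icc (m + 1) (runEnd n E (m + 1))).filter (fun t => D t = false ∧ E i < E t)
        = (Ioc m n).filter (fun t => D t = false ∧ CycDec E i t) := by
      have hen2 := runEnd_le n E (m + 1)
      ext t
      simp only [mem_filter, mem_Icc, mem_Ioc]
      constructor
      · rintro ⟨⟨h1, h2⟩, h3, h4⟩
        exact ⟨by omega, h3, (cycDec_of_ascent hre (by omega) hasc).2
          ⟨hdec, (le_runEnd_iff E (by omega) (by omega)).1 h2, h4⟩⟩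
      · rintro ⟨h1, h3, h4⟩
        have := (cycDec_of_ascent hre (by omega) hasc).1 h4
        exact ⟨⟨by omega, (le_runEnd_iff E (by omega) (by omega)).2 this.2.1⟩, h3, this.2.2⟩
    rw [hB, ← card_union_of_disjoint, ← filter_union]
    · congr 2
      ext t
      simp only [mem_union, mem_Ioc]; omega
    · apply disjoint_filter_filter
      rw [disjoint_left]
      intro t
      simp only [mem_Ioc]; omega

lemma card_filter_eq_one_iff (s : Finset ℕ) (P : ℕ → Prop) [DecidablePred P] :
    (s.filter P).card = 1 ↔ ∃! t, t ∈ s ∧ P t := by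
  rw [Finset.card_eq_one]
  constructor
  · rintro ⟨a, ha⟩
    have h : ∀ t, (t ∈ s ∧ P t) ↔ t = a := fun t => by
      rw [← mem_filter, ha, mem_singleton]
    exact ⟨a, (h a).2 rfl, fun t ht => (h t).1 ht⟩
  · rintro ⟨a, ha, hu⟩
    refine ⟨a, ?_⟩
    ext t
    rw [mem_filter, mem_singleton]
    exact ⟨hu t, fun h => h ▸ ha⟩

lemma hasSchedOne_iff {n : ℕ} {E : ℕ → ℕ} {D : ℕ → Bool}
    (hE : ∀ a b, a < b → b ≤ n → E a ≠ E b) :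
    HasSchedOne n E D ↔ ∀ i, 1 ≤ i → i ≤ n →
      (D i = false → ∃! t, t < i ∧ D t = false ∧ CycDec E t i) ∧
      (D i = true → ∃! t, (i < t ∧ t ≤ n) ∧ D t = false ∧ CycDec E i t) := by
  classical
  unfold HasSchedOne
  refine forall_congr' fun i => ?_
  rw [mem_Icc, and_imp]
  refine imp_congr_right fun h1 => imp_congr_right fun h2 => ?_
  cases hD : D i
  · rw [schedNum_undec hE h2 hD, card_filter_eq_one_iff]
    simp [mem_range]
  · rw [schedNum_dec hE h2 hD, card_filter_eq_one_iff]
    simp [mem_Ioc]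

/-! ### The first undecorated position -/

section First

variable {n : ℕ} {E : ℕ → ℕ} {D : ℕ → Bool}

/-- The last position cannot be decorated, as nothing follows it. -/
lemma firstUndecPos_spec (hn : 1 ≤ n)
    (hs : ∀ i, 1 ≤ i → i ≤ n →
      (D i = false → ∃! t, t < i ∧ D t = false ∧ CycDec E t i) ∧
      (D i = true → ∃! t, (i < t ∧ t ≤ n) ∧ D t = false ∧ CycDec E i t)) :
    1 ≤ firstUndecPos n D ∧ firstUndecPos n D ≤ n ∧ D (firstUndecPos n D) = false ∧
      ∀ t, 1 ≤ t → D t = false → firstUndecPos n D ≤ t := by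
  have hDn : D n = false := by
    cases h : D n
    · rfl
    · obtain ⟨t, ht, -⟩ := (hs n hn le_rfl).2 h
      omega
  have hmin : ∀ t, 1 ≤ t → D t = false → firstUndecPos n D ≤ t :=
    fun t h1 h2 => Nat.find_min' _ (Or.inr ⟨h1, h2⟩)
  have hle := hmin n hn hDn
  have hspec : n < firstUndecPos n D ∨
      (1 ≤ firstUndecPos n D ∧ D (firstUndecPos n D) = false) := by
    unfold firstUndecPos
    exact Nat.find_spec (p := fun i => n < i ∨ (1 ≤ i ∧ D i = false)) _
  rcases hspec with h | h
  · omega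
  · exact ⟨h.1, hle, h.2, hmin⟩

variable {p : ℕ}

lemma cycDec_first (h : ∃! t, t < p ∧ D t = false ∧ CycDec E t p)
    (hmin : ∀ t, 1 ≤ t → D t = false → p ≤ t) : CycDec E 0 p := by
  obtain ⟨t, ⟨h1, h2, h3⟩, -⟩ := h
  rcases Nat.eq_zero_or_pos t with rfl | h0
  · exact h3
  · have := hmin t h0 h2; omega

lemma eq_first_of_cycDec {i : ℕ} (hD0 : D 0 = false) (hi : 1 ≤ i) (hDi : D i = false)
    (h : ∃! t, t < i ∧ D t = false ∧ CycDec E t i) (hc : CycDec E 0 i)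
    (hp : 1 ≤ p) (hDp : D p = false) (hmin : ∀ t, 1 ≤ t → D t = false → p ≤ t) : i = p := by
  by_contra hne
  have hpi : p < i := lt_of_le_of_ne (hmin i hi hDi) (Ne.symm hne)
  have := h.unique ⟨hpi, hDp, hc.mono (Nat.zero_le _) le_rfl⟩ ⟨hi, hD0, hc⟩
  omega

end First

/-! ### The shift -/

section Shift

variable {n k : ℕ} {E : ℕ → ℕ}

lemma shiftEnt_succ (hk1 : 1 ≤ k) (hk2 : k ≤ n + 1) {i : ℕ} (hEi : E i ≤ n) :
    shiftEnt n k E (i + 1) = if k + E i ≤ n + 1 then k + E i else k + E i - (n + 1) := by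
  have hsub : i + 1 - 1 = i := rfl
  unfold shiftEnt
  rw [if_neg (by omega), hsub]
  rcases lt_trichotomy (k + E i) (n + 1) with h | h | h
  · rw [Nat.mod_eq_of_lt h, if_neg (by omega), if_pos (by omega)]
  · rw [h]; simp
  · have : (k + E i) % (n + 1) = k + E i - (n + 1) := by
      rw [Nat.mod_eq_sub_mod (by omega), Nat.mod_eq_of_lt (by omega)]
    rw [this, if_neg (by omega), if_neg (by omega)]

lemma cyc_shift (hk1 : 1 ≤ k) (hk2 : k ≤ n + 1) {a b c : ℕ} (ha : E a ≤ n) (hb : E b ≤ n)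
    (hc : E c ≤ n) :
    Cyc (shiftEnt n k E (a + 1)) (shiftEnt n k E (b + 1)) (shiftEnt n k E (c + 1)) ↔
      Cyc (E a) (E b) (E c) := by
  rw [shiftEnt_succ hk1 hk2 ha, shiftEnt_succ hk1 hk2 hb, shiftEnt_succ hk1 hk2 hc]
  unfold Cyc
  split_ifs <;> omega

lemma cycDec_shift (hk1 : 1 ≤ k) (hk2 : k ≤ n + 1) (hE : ∀ i, E i ≤ n) (p q : ℕ) :
    CycDec (shiftEnt n k E) (p + 1) (q + 1) ↔ CycDec E p q := by
  constructor
  · intro h a b c h1 h2 h3 h4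
    rw [← cyc_shift hk1 hk2 (hE a) (hE b) (hE c)]
    exact h _ _ _ (by omega) (by omega) (by omega) (by omega)
  · intro h a b c h1 h2 h3 h4
    obtain ⟨a, rfl⟩ : ∃ x, a = x + 1 := ⟨a - 1, by omega⟩
    obtain ⟨b, rfl⟩ : ∃ x, b = x + 1 := ⟨b - 1, by omega⟩
    obtain ⟨c, rfl⟩ : ∃ x, c = x + 1 := ⟨c - 1, by omega⟩
    rw [cyc_shift hk1 hk2 (hE a) (hE b) (hE c)]
    exact h _ _ _ (by omega) (by omega) (by omega) (by omega)

lemma shiftEnt_ne (hk1 : 1 ≤ k) (hk2 : k ≤ n + 1) (hE : ∀ i, E i ≤ n)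
    (hinj : ∀ a b, a < b → b ≤ n → E a ≠ E b) (a b : ℕ) (hab : a < b) (hb : b ≤ n + 1) :
    shiftEnt n k E a ≠ shiftEnt n k E b := by
  obtain ⟨b, rfl⟩ : ∃ x, b = x + 1 := ⟨b - 1, by omega⟩
  have hEb := hE b
  rw [shiftEnt_succ hk1 hk2 hEb]
  rcases Nat.eq_zero_or_pos a with rfl | ha
  · have : shiftEnt n k E 0 = 0 := rfl
    rw [this]
    split_ifs <;> omega
  · obtain ⟨a, rfl⟩ : ∃ x, a = x + 1 := ⟨a - 1, by omega⟩
    have hEa := hE a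
    have := hinj a b (by omega) (by omega)
    rw [shiftEnt_succ hk1 hk2 hEa]
    split_ifs <;> omega

/-- The new letter `0` extends the factor ending at position `p + 1` exactly when position `1` of
`δ_k(τ)` is decorated. -/
lemma cycDec_zero_shift_iff (hk1 : 1 ≤ k) (hk2 : k ≤ n + 1) (hE : ∀ i, E i ≤ n) (hE0 : E 0 = 0)
    {p : ℕ} (hp : 1 ≤ p) (hc : CycDec E 0 p) :
    CycDec (shiftEnt n k E) 0 (p + 1) ↔ n + 1 - E p < k := by
  have hF0 : shiftEnt n k E 0 = 0 := rfl
  have hF1 : shiftEnt n k E (0 + 1) = k := by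
    rw [shiftEnt_succ hk1 hk2 (hE 0), hE0, if_pos (by omega), add_zero]
  have hEp := hE p
  constructor
  · intro h
    have := h 0 (0 + 1) (p + 1) le_rfl (by omega) (by omega) le_rfl
    rw [hF0, hF1, shiftEnt_succ hk1 hk2 hEp] at this
    unfold Cyc at this
    split_ifs at this <;> omega
  · intro hk a b c h1 h2 h3 h4
    rcases Nat.eq_zero_or_pos a with rfl | ha
    · obtain ⟨b, rfl⟩ : ∃ x, b = x + 1 := ⟨b - 1, by omega⟩
      obtain ⟨c, rfl⟩ : ∃ x, c = x + 1 := ⟨c - 1, by omega⟩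
      have hEc := hE c
      have hEb := hE b
      -- `τ_x ≥ τ_p` on `1,…,p`, so every letter `k + τ_x` with `1 ≤ x ≤ p` wraps around.
      have key : ∀ x, 1 ≤ x → x ≤ p → E p ≤ E x := by
        intro x hx hx'
        rcases Nat.eq_or_lt_of_le hx' with rfl | hx'
        · exact le_rfl
        · have := hc 0 x p le_rfl hx hx' le_rfl
          rw [hE0] at this
          unfold Cyc at this; omega
      have kc := key c (by omega) (by omega)
      rw [hF0, shiftEnt_succ hk1 hk2 hEc, if_neg (by omega)]
      rcases Nat.eq_zero_or_pos b with rfl | hb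
      · rw [hF1]; unfold Cyc; omega
      · have kb := key b hb (by omega)
        have := hc 0 b c le_rfl hb (by omega) (by omega)
        rw [hE0] at this
        rw [shiftEnt_succ hk1 hk2 hEb, if_neg (by omega)]
        unfold Cyc at this ⊢; omega
    · exact (cycDec_shift hk1 hk2 hE 0 p).2 hc a b c ha h2 h3 h4

/-- The theorem for an arbitrary word of distinct letters in `{0,…,n}` starting with `0`. -/
lemma hasSchedOne_shift {D : ℕ → Bool} (hn : 1 ≤ n) (hk1 : 1 ≤ k) (hk2 : k ≤ n + 1)
    (hE : ∀ i, E i ≤ n) (hE0 : E 0 = 0) (hD0 : D 0 = false)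
    (hinj : ∀ a b, a < b → b ≤ n → E a ≠ E b) (hs : HasSchedOne n E D) :
    HasSchedOne (n + 1) (shiftEnt n k E) (deltaDec n k D (aVal n E D)) := by
  rw [hasSchedOne_iff hinj] at hs
  rw [hasSchedOne_iff (shiftEnt_ne hk1 hk2 hE hinj)]
  obtain ⟨hp1, hpn, hDp, hmin⟩ := firstUndecPos_spec hn hs
  unfold aVal
  set p := firstUndecPos n D
  have hcp : CycDec E 0 p := cycDec_first ((hs p hp1 hpn).1 hDp) hmin
  have hzero := cycDec_zero_shift_iff hk1 hk2 hE hE0 hp1 hcp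
  have hsh := cycDec_shift hk1 hk2 hE
  set F := shiftEnt n k E
  set D' := deltaDec n k D (E p) with hD'
  have d0 : D' 0 = false := rfl
  have d1 : D' 1 = decide (n + 1 - E p < k) := rfl
  have d2 : ∀ i, 1 ≤ i → D' (i + 1) = D i := by
    intro i hi
    rw [hD']; unfold deltaDec
    rw [if_neg (by omega), if_neg (by omega)]; rfl
  intro j hj1 hj2
  obtain ⟨i, rfl⟩ : ∃ x, j = x + 1 := ⟨j - 1, by omega⟩
  rcases Nat.eq_zero_or_pos i with rfl | hi
  · refine ⟨fun _ => ?_, fun h => ?_⟩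
    · refine ⟨0, ⟨by omega, d0, fun a b c _ _ _ _ => by omega⟩, fun t ht => by omega⟩
    · refine ⟨p + 1, ⟨⟨by omega, by omega⟩, by rw [d2 p hp1, hDp], (hsh 0 p).2 hcp⟩, ?_⟩
      rintro t ⟨⟨h1, h2⟩, h3, h4⟩
      obtain ⟨s, rfl⟩ : ∃ x, t = x + 1 := ⟨t - 1, by omega⟩
      have hs1 : 1 ≤ s := by omega
      rw [d2 s hs1] at h3
      rw [eq_first_of_cycDec hD0 hs1 h3 ((hs s hs1 (by omega)).1 h3) ((hsh 0 s).1 h4) hp1 hDp hmin]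
  · rw [d2 i hi]
    refine ⟨fun h => ?_, fun h => ?_⟩
    · have hu := (hs i hi (by omega)).1 h
      by_cases hc : CycDec E 0 i
      · obtain rfl := eq_first_of_cycDec hD0 hi h hu hc hp1 hDp hmin
        have hnot : ∀ s, 1 ≤ s → s < p → D s ≠ false := by
          intro s h1 h2 h3
          have := hmin s h1 h3; omega
        by_cases hk : n + 1 - E p < k
        · refine ⟨0, ⟨by omega, d0, hzero.2 hk⟩, ?_⟩
          rintro t ⟨h1, h2, h3⟩
          by_contra ht
          obtain ⟨s, rfl⟩ : ∃ x, t = x + 1 := ⟨t - 1, by omega⟩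
          rcases Nat.eq_zero_or_pos s with rfl | hs0
          · rw [d1] at h2
            simp [hk] at h2
          · rw [d2 s hs0] at h2
            exact hnot s hs0 (by omega) h2
        · refine ⟨1, ⟨by omega, by rw [d1]; simp [hk], (hsh 0 p).2 hcp⟩, ?_⟩
          rintro t ⟨h1, h2, h3⟩
          rcases Nat.eq_zero_or_pos t with rfl | ht
          · exact absurd (hzero.1 h3) hk
          · obtain ⟨s, rfl⟩ : ∃ x, t = x + 1 := ⟨t - 1, by omega⟩
            rcases Nat.eq_zero_or_pos s with rfl | hs0
            · rfl
            · rw [d2 s hs0] at h2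
              exact absurd h2 (hnot s hs0 (by omega))
      · obtain ⟨s, ⟨h1, h2, h3⟩, h4⟩ := hu
        have hs0 : 1 ≤ s := by
          rcases Nat.eq_zero_or_pos s with rfl | h'
          · exact absurd h3 hc
          · exact h'
        refine ⟨s + 1, ⟨by omega, by rw [d2 s hs0, h2], (hsh s i).2 h3⟩, ?_⟩
        rintro t ⟨g1, g2, g3⟩
        have ht : 2 ≤ t := by
          by_contra ht
          exact hc ((hsh 0 i).1 (g3.mono (by omega) le_rfl))
        obtain ⟨u, rfl⟩ : ∃ x, t = x + 1 := ⟨t - 1, by omega⟩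
        rw [d2 u (by omega)] at g2
        rw [h4 u ⟨by omega, g2, (hsh u i).1 g3⟩]
    · obtain ⟨s, ⟨⟨h1, h1'⟩, h2, h3⟩, h4⟩ := (hs i hi (by omega)).2 h
      refine ⟨s + 1, ⟨by omega, by rw [d2 s (by omega), h2], (hsh i s).2 h3⟩, ?_⟩
      rintro t ⟨g1, g2, g3⟩
      obtain ⟨u, rfl⟩ : ∃ x, t = x + 1 := ⟨t - 1, by omega⟩
      rw [d2 u (by omega)] at g2
      rw [h4 u ⟨by omega, g2, (hsh i u).1 g3⟩]

end Shift

lemma ent_le {n : ℕ} (σ : Equiv.Perm (Fin n)) (i : ℕ) : ent σ i ≤ n := by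
  unfold ent
  split_ifs
  · exact (σ _).isLt
  · exact Nat.zero_le _

lemma ent_ne {n : ℕ} (σ : Equiv.Perm (Fin n)) (a b : ℕ) (hab : a < b) (hb : b ≤ n) :
    ent σ a ≠ ent σ b := by
  unfold ent
  rw [dif_pos (show 1 ≤ b ∧ b ≤ n by omega)]
  split_ifs with h
  · intro heq
    have := σ.injective (Fin.ext (Nat.succ_injective heq))
    simp only [Fin.mk.injEq] at this
    omega
  · omega

end QEuler

open QEuler

/-- If `τ` is a decorated permutation of `{1,…,n}` with all schedule
numbers equal to `1`, then for every `1 ≤ k ≤ n+1` the decorated permutation `δ_k(τ)`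
of `{1,…,n+1}` has all of its `n+1` schedule numbers equal to `1`. -/
theorem delta_preserves_sched_one {n : ℕ} (τ : Equiv.Perm (Fin n)) (D : Finset (Fin n))
    (hs : HasSchedOne n (ent τ) (isDec D))
    (k : ℕ) (hk1 : 1 ≤ k) (hk2 : k ≤ n + 1) :
    HasSchedOne (n + 1) (shiftEnt n k (ent τ))
      (deltaDec n k (isDec D) (aVal n (ent τ) (isDec D))) := by
  rcases Nat.eq_zero_or_pos n with rfl | hn
  · -- `τ` is empty: `k = 1`, `δ_1(τ)` is the single letter `1`, and the junk value `a(τ) = 0`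
    -- leaves it undecorated.
    obtain rfl : k = 1 := by omega
    have h0 : aVal 0 (ent τ) (isDec D) = 0 := Nat.le_zero.1 (ent_le τ _)
    rw [h0, hasSchedOne_iff (shiftEnt_ne hk1 hk2 (ent_le τ) (ent_ne τ))]
    intro i h1 h2
    obtain rfl : i = 1 := by omega
    refine ⟨fun _ => ⟨0, ⟨by omega, rfl, fun a b c _ _ _ _ => by omega⟩, fun t ht => by omega⟩,
      fun h => ?_⟩
    simp [deltaDec] at h
  · exact hasSchedOne_shift hn hk1 hk2 (ent_le τ) (by simp [ent]) (by simp [isDec]) (ent_ne τ) hs
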